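/- Let Z ⊆ ℝ^d be convex, let k ≥ 1, let m₁, …, m_k ∈ ℝ^d and α₁, …, α_k > 0, and let β ∈ ℕ with β ≥ 1. Let x ∈ Z, y := x + Σᵢ αᵢmᵢ ∈ Z, and suppose that for each i: the segment from x to x + (αᵢ/β)·mᵢ lies in Z, and the segment from y − (αᵢ/β)·mᵢ to y lies in Z. Then the piecewise-linear trajectory from x to y obtained by repeating βk times the scaled sequence ((α₁/(βk))m₁, …, (α_k/(βk))m_k) lies entirely in Z. -/

import Mathlib

/-- A schedule is a finite list of (duration, mode) pairs. `StaysIn Z x π` says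
that the piecewise-linear trajectory induced by `π` from `x` remains in `Z`. -/
def StaysIn {d : ℕ} (Z : Set (Fin d → ℝ)) : (Fin d → ℝ) → List (ℝ × (Fin d → ℝ)) → Prop
  | x, [] => x ∈ Z
  | x, (a, m) :: rest =>
      (∀ t ∈ Set.Icc (0 : ℝ) a, x + t • m ∈ Z) ∧ StaysIn Z (x + a • m) rest

theorem staysIn_ofFn_append {d : ℕ} (Z : Set (Fin d → ℝ)) (rest : List (ℝ × (Fin d → ℝ))) :
    ∀ (n : ℕ) (a : Fin n → ℝ) (m : Fin n → (Fin d → ℝ)) (z : Fin d → ℝ)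
      (_ : ∀ i, 0 ≤ a i)
      (_ : ∀ c : Fin n → ℝ, (∀ i, 0 ≤ c i ∧ c i ≤ a i) → z + ∑ i, c i • m i ∈ Z)
      (_ : StaysIn Z (z + ∑ i, a i • m i) rest),
      StaysIn Z z (List.ofFn (fun i => (a i, m i)) ++ rest) := by
  intro n
  induction n with
  | zero =>
    intro a m z _ _ h
    simpa using h
  | succ n ih =>
    intro a m z ha hc h
    rw [List.ofFn_succ, List.cons_append]
    refine ⟨?_, ?_⟩
    · intro t ht
      have := hc (Fin.cons t (fun _ => 0)) (by
        intro i
        refine Fin.cases ?_ (fun i => ?_) i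
        · simpa using ht
        · simpa using ha i.succ)
      simpa [Fin.sum_univ_succ] using this
    · apply ih (fun i => a i.succ) (fun i => m i.succ)
      · exact fun i => ha i.succ
      · intro c hc'
        have := hc (Fin.cons (a 0) c) (by
          intro i
          refine Fin.cases ?_ (fun i => ?_) i
          · simpa using ha 0
          · simpa using hc' i)
        simpa [Fin.sum_univ_succ, add_assoc] using this
      · simpa [Fin.sum_univ_succ, add_assoc] using h

theorem key_mem {d k : ℕ} (hk : 1 ≤ k) (Z : Set (Fin d → ℝ)) (hZ : Convex ℝ Z)
    (m : Fin k → (Fin d → ℝ)) (α : Fin k → ℝ) (hα : ∀ i, 0 < α i)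
    (β : ℕ) (hβ : 1 ≤ β)
    (x y : Fin d → ℝ) (hy : y = x + ∑ i, α i • m i)
    (hfwd : ∀ i, ∀ t ∈ Set.Icc (0 : ℝ) 1, x + t • ((α i / β) • m i) ∈ Z)
    (hbwd : ∀ i, ∀ t ∈ Set.Icc (0 : ℝ) 1, (y - (α i / β) • m i) + t • ((α i / β) • m i) ∈ Z)
    (j : ℕ) (hj : j + 1 ≤ β * k) (c : Fin k → ℝ)
    (hc : ∀ i, 0 ≤ c i ∧ c i ≤ α i / (β * k)) :
    x + ((j : ℝ) / (β * k)) • (∑ i, α i • m i) + ∑ i, c i • m i ∈ Z := by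
  have hk0 : (0 : ℝ) < k := by exact_mod_cast hk
  have hβ0 : (0 : ℝ) < β := by exact_mod_cast hβ
  have hN : (j : ℝ) + 1 ≤ β * k := by exact_mod_cast hj
  have hj0 : (0 : ℝ) ≤ j := Nat.cast_nonneg j
  obtain ⟨s, hs0, hs1, hs⟩ : ∃ s : ℝ, 0 ≤ s ∧ s ≤ 1 ∧ s * (β * k - 1) = j := by
    by_cases h : (β * k - 1 : ℝ) = 0
    · exact ⟨0, le_rfl, zero_le_one, by linarith⟩
    · have hp : (0 : ℝ) < β * k - 1 := lt_of_le_of_ne (by linarith) (Ne.symm h)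
      exact ⟨j / (β * k - 1), by positivity, by rw [div_le_one hp]; linarith,
        by field_simp⟩
  have hR : ∀ i, (1 - s) • (x + (c i * (β * k) / α i) • ((α i / β) • m i)) +
      s • ((y - (α i / β) • m i) + (c i * (β * k) / α i) • ((α i / β) • m i)) ∈ Z := by
    intro i
    have hai := hα i
    have he : c i * (β * k) / α i ∈ Set.Icc (0 : ℝ) 1 := by
      refine ⟨by have := (hc i).1; positivity, ?_⟩
      rw [div_le_one hai]
      exact (le_div_iff₀ (by positivity)).1 (hc i).2
    exact hZ (hfwd i _ he) (hbwd i _ he) (by linarith) hs0 (by ring)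
  have hsum := hZ.sum_mem (t := Finset.univ) (w := fun _ : Fin k => (1 / k : ℝ))
    (fun _ _ => by positivity) (by simp; field_simp) (fun i _ => hR i)
  convert hsum using 1
  have hterm : ∀ i, (1 / k : ℝ) • ((1 - s) • (x + (c i * (β * k) / α i) • ((α i / β) • m i)) +
      s • ((y - (α i / β) • m i) + (c i * (β * k) / α i) • ((α i / β) • m i))) =
      (1 / k : ℝ) • (x + s • ∑ i, α i • m i) + c i • m i - (s / (β * k)) • (α i • m i) := by
    intro i
    have hai := (hα i).ne'
    rw [hy]
    generalize ∑ i, α i • m i = S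
    ext l
    simp only [Pi.add_apply, Pi.smul_apply, Pi.sub_apply, smul_eq_mul]
    field_simp
    ring
  rw [Finset.sum_congr rfl (fun i _ => hterm i), Finset.sum_sub_distrib, Finset.sum_add_distrib,
    ← Finset.smul_sum, ← Finset.smul_sum, ← hs]
  generalize ∑ i, α i • m i = S
  generalize ∑ i, c i • m i = T
  ext l
  simp
  field_simp
  ring

theorem stmt_16 {d k : ℕ} (hk : 1 ≤ k) (Z : Set (Fin d → ℝ)) (hZ : Convex ℝ Z)
    (m : Fin k → (Fin d → ℝ)) (α : Fin k → ℝ) (hα : ∀ i, 0 < α i)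
    (β : ℕ) (hβ : 1 ≤ β)
    (x y : Fin d → ℝ) (hx : x ∈ Z) (hy : y = x + ∑ i, α i • m i) (hyZ : y ∈ Z)
    (hfwd : ∀ i, ∀ t ∈ Set.Icc (0 : ℝ) 1, x + t • ((α i / β) • m i) ∈ Z)
    (hbwd : ∀ i, ∀ t ∈ Set.Icc (0 : ℝ) 1, (y - (α i / β) • m i) + t • ((α i / β) • m i) ∈ Z) :
    StaysIn Z x
      (List.flatten (List.replicate (β * k)
        (List.ofFn (fun i : Fin k => (α i / (β * k), m i))))) := by
  have hk0 : (0 : ℝ) < k := by exact_mod_cast hk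
  have hβ0 : (0 : ℝ) < β := by exact_mod_cast hβ
  have main : ∀ r j : ℕ, j + r = β * k →
      StaysIn Z (x + ((j : ℝ) / (β * k)) • (∑ i, α i • m i))
        (List.flatten (List.replicate r
          (List.ofFn (fun i : Fin k => (α i / (β * k), m i))))) := by
    intro r
    induction r with
    | zero =>
      intro j hj
      have hj' : (j : ℝ) = β * k := by exact_mod_cast hj
      have h1 : (j : ℝ) / (β * k) = 1 := by rw [hj']; field_simp
      rw [h1, one_smul, ← hy]
      simpa [StaysIn] using hyZ
    | succ r ih =>
      intro j hj
      rw [List.replicate_succ, List.flatten_cons]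
      apply staysIn_ofFn_append Z _ k (fun i => α i / (β * k)) m
      · intro i
        have := hα i
        positivity
      · intro c hc
        exact key_mem hk Z hZ m α hα β hβ x y hy hfwd hbwd j (by omega) c hc
      · have h := ih (j + 1) (by omega)
        convert h using 1
        have : ∑ i, (α i / (β * k : ℝ)) • m i = (1 / (β * k : ℝ)) • ∑ i, α i • m i := by
          rw [Finset.smul_sum]
          refine Finset.sum_congr rfl fun i _ => ?_
          rw [smul_smul]
          congr 1
          ring
        rw [this, add_assoc, ← add_smul]
        congr 2
        push_cast
        ring
  simpa using main (β * k) 0 (by simp)
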